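/- Let f : ℝ² → ℝ be a continuous convex function and set Φ(t) = f(cos t, sin t) for t ∈ [0, 2π]. Then there exists a constant c(f) > 0 such that ∨(Φ'; 0, 2π) ≤ c(f). -/

import Mathlib

/-!
The function `Φ(t) = f(cos t, sin t)` is semiconvex: `Φ(t) + C t² / 2` is convex for a suitable
constant `C`, so `Φ'(t) + C t` is nondecreasing, and a bounded function that becomes monotone
after adding a linear term has bounded variation on a bounded interval.

In detail, `f` has a supporting hyperplane at every point (`ConvexOn.exists_support`, by
Hahn-Banach applied to the strict epigraph), and its slope at points of the unit circle is
bounded by a uniform constant `K`, because `f` is bounded on the disk of radius `2`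
(`exists_circle_support`). Restricting the supporting plane at `(cos t, sin t)` to the circle and
expanding `cos` and `sin` to second order gives
`Φ(s) ≥ Φ(t) + Φ'(t) (s - t) - 5 K (s - t)²` at each point `t` of differentiability
(`quadratic_support`). Adding this to the same inequality with `s` and `t` exchanged
yields `Φ'(s) - Φ'(t) ≥ -10 K (s - t)` for `t < s`. Hence
`|Φ'(s) - Φ'(t)| ≤ Φ'(s) - Φ'(t) + 20 K (s - t)`, whose sum along a sequence telescopes.
-/

open Set
open scoped ENNReal NNReal

noncomputable section

/-- Variation of the derivative of `f` on `[a,b]`: supremum, over finite increasing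
sequences of points of `[a,b]` at which `f` is differentiable, of the sums of norms of
consecutive differences of derivatives. -/
def derivVariation {E : Type*} [NormedAddCommGroup E] [NormedSpace ℝ E]
    (f : ℝ → E) (a b : ℝ) : ℝ≥0∞ :=
  ⨆ (N : ℕ) (t : Fin (N + 1) → ℝ) (_ : StrictMono t)
    (_ : ∀ i, t i ∈ Set.Icc a b ∧ DifferentiableAt ℝ f (t i)),
    ∑ i : Fin N, ENNReal.ofReal ‖deriv f (t i.succ) - deriv f (t i.castSucc)‖

/-- The point `(cos t, sin t)` on the unit circle of the Euclidean plane. -/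
def circlePt (t : ℝ) : EuclideanSpace ℝ (Fin 2) :=
  (WithLp.equiv 2 (Fin 2 → ℝ)).symm ![Real.cos t, Real.sin t]

theorem ConvexOn.exists_support {E : Type*} [NormedAddCommGroup E] [NormedSpace ℝ E]
    {f : E → ℝ} (hcont : Continuous f) (hconv : ConvexOn ℝ Set.univ f) (p : E) :
    ∃ l : E →L[ℝ] ℝ, ∀ y, f p + l (y - p) ≤ f y := by
  have hS : Convex ℝ {q : E × ℝ | q.1 ∈ Set.univ ∧ f q.1 < q.2} := hconv.convex_strict_epigraph
  have hO : IsOpen {q : E × ℝ | q.1 ∈ Set.univ ∧ f q.1 < q.2} := by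
    simpa using isOpen_lt (hcont.comp continuous_fst) continuous_snd
  obtain ⟨φ, hφ⟩ := geometric_hahn_banach_open_point (x := (p, f p)) hS hO (by simp)
  have hsplit : ∀ y r, φ (y, r) = φ (y, 0) + r * φ (0, 1) := by
    intro y r
    have : ((y, r) : E × ℝ) = (y, 0) + r • ((0, 1) : E × ℝ) := by simp
    rw [this, map_add, map_smul, smul_eq_mul]
  -- Not vertical: `φ` is strictly smaller at `(p, f p + 1)`, in the epigraph, than at `(p, f p)`.
  have hc : φ (0, 1) < 0 := by
    have := hφ (p, f p + 1) (by simp)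
    rw [hsplit p (f p + 1), hsplit p (f p)] at this
    linarith
  have key : ∀ y, φ (y, 0) + f y * φ (0, 1) ≤ φ (p, 0) + f p * φ (0, 1) := by
    intro y
    refine le_of_forall_pos_le_add fun ε hε => ?_
    have := hφ (y, f y + ε / (-φ (0, 1))) (by simpa using div_pos hε (neg_pos.2 hc))
    rw [hsplit y, hsplit p] at this
    have h2 : (ε / (-φ (0, 1))) * φ (0, 1) = -ε := by
      field_simp [hc.ne]
    nlinarith
  refine ⟨(-(φ (0, 1))⁻¹) • φ.comp (ContinuousLinearMap.inl ℝ E ℝ), fun y => ?_⟩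
  have hk := key y
  have hlin : φ (y - p, 0) = φ (y, 0) - φ (p, 0) := by
    rw [← map_sub]; simp
  simp only [smul_apply, ContinuousLinearMap.comp_apply,
    ContinuousLinearMap.inl_apply, smul_eq_mul, hlin]
  have h3 : f p - f y ≤ (φ (0, 1))⁻¹ * (φ (y, 0) - φ (p, 0)) := by
    rw [inv_mul_eq_div, le_div_iff_of_neg hc]
    linarith
  linarith

theorem circlePt_sub (s t : ℝ) :
    circlePt s - circlePt t = (Real.cos s - Real.cos t) • EuclideanSpace.single 0 1
      + (Real.sin s - Real.sin t) • EuclideanSpace.single 1 1 := by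
  ext i
  fin_cases i <;> simp [circlePt]

theorem norm_circlePt (t : ℝ) : ‖circlePt t‖ = 1 := by
  simp [circlePt, EuclideanSpace.norm_eq]

/-- Supporting planes of `f` along the unit circle, with uniformly bounded slopes `(a, b)`. -/
theorem exists_circle_support {f : EuclideanSpace ℝ (Fin 2) → ℝ}
    (hcont : Continuous f) (hconv : ConvexOn ℝ Set.univ f) :
    ∃ K : ℝ, 0 < K ∧ ∀ t, ∃ a b : ℝ, |a| ≤ K ∧ |b| ≤ K ∧
      ∀ s, f (circlePt t) + (a * (Real.cos s - Real.cos t) + b * (Real.sin s - Real.sin t))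
        ≤ f (circlePt s) := by
  obtain ⟨B, hB⟩ :=
    (isCompact_closedBall (0 : EuclideanSpace ℝ (Fin 2)) 2).exists_bound_of_continuousOn
    hcont.continuousOn
  have hB0 : 0 ≤ B := (norm_nonneg _).trans (hB 0 (by simp))
  refine ⟨2 * B + 1, by linarith, fun t => ?_⟩
  obtain ⟨l, hl⟩ := hconv.exists_support hcont (circlePt t)
  have hle : ∀ v : EuclideanSpace ℝ (Fin 2), ‖v‖ ≤ 1 → l v ≤ 2 * B + 1 := by
    intro v hv
    have h1 := hl (circlePt t + v)
    rw [add_sub_cancel_left] at h1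
    have h2 := abs_le.1 (hB (circlePt t) (by simp [norm_circlePt]))
    have h3 := abs_le.1 (hB (circlePt t + v) (by
      rw [mem_closedBall_zero_iff]
      have := norm_add_le (circlePt t) v
      rw [norm_circlePt] at this
      linarith))
    linarith [h2.1, h3.2]
  have habs : ∀ v : EuclideanSpace ℝ (Fin 2), ‖v‖ ≤ 1 → |l v| ≤ 2 * B + 1 := by
    intro v hv
    refine abs_le.2 ⟨?_, hle v hv⟩
    have := hle (-v) (by simpa using hv)
    rw [map_neg] at this
    linarith
  refine ⟨l (EuclideanSpace.single 0 1), l (EuclideanSpace.single 1 1),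
    habs _ (by simp), habs _ (by simp), fun s => ?_⟩
  have := hl (circlePt s)
  rw [circlePt_sub, map_add, map_smul, map_smul, smul_eq_mul, smul_eq_mul] at this
  linarith

theorem abs_sin_sub_self_le (h : ℝ) : |Real.sin h - h| ≤ 2 * h ^ 2 := by
  have pos : ∀ h : ℝ, 0 ≤ h → |Real.sin h - h| ≤ 2 * h ^ 2 := by
    intro h h0
    rw [abs_sub_comm, abs_of_nonneg (by linarith [Real.sin_le h0])]
    rcases le_total h 1 with h1 | h1
    · rcases h0.eq_or_lt with rfl | h0
      · simp
      · have := Real.sin_gt_sub_cube h0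
        nlinarith [mul_nonneg (sq_nonneg h) (sub_nonneg.2 h1), sq_nonneg h]
    · nlinarith [Real.neg_one_le_sin h]
  rcases le_total 0 h with h0 | h0
  · exact pos h h0
  · have := pos (-h) (by linarith)
    rw [Real.sin_neg, neg_sq, ← neg_sub', abs_neg] at this
    exact this

/-- A function on `ℝ` supported from below at `t` by a trigonometric function is supported there
by a concave parabola. The slope has to be `φ' t`, since the difference has a minimum at `t`. -/
theorem quadratic_support {φ : ℝ → ℝ} {t a b K : ℝ} (ha : |a| ≤ K) (hb : |b| ≤ K)
    (hφ : ∀ s, φ t + (a * (Real.cos s - Real.cos t) + b * (Real.sin s - Real.sin t)) ≤ φ s)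
    (hd : DifferentiableAt ℝ φ t) :
    |deriv φ t| ≤ 2 * K ∧ ∀ s, φ t + deriv φ t * (s - t) - 5 * K * (s - t) ^ 2 ≤ φ s := by
  have hK : 0 ≤ K := (abs_nonneg a).trans ha
  have hder : deriv φ t = -a * Real.sin t + b * Real.cos t := by
    have hD : HasDerivAt (fun s => φ s - (a * Real.cos s + b * Real.sin s))
        (deriv φ t - (a * -Real.sin t + b * Real.cos t)) t :=
      hd.hasDerivAt.sub (((Real.hasDerivAt_cos t).const_mul a).add
        ((Real.hasDerivAt_sin t).const_mul b))
    have hmin : IsLocalMin (fun s => φ s - (a * Real.cos s + b * Real.sin s)) t :=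
      Filter.Eventually.of_forall fun s => by
        have := hφ s
        simp only
        linarith
    have := hmin.hasDerivAt_eq_zero hD
    linarith
  have bound : ∀ x y u v : ℝ, |x| ≤ K → |y| ≤ K → |u| ≤ 1 → |v| ≤ 1 →
      |x * u + y * v| ≤ 2 * K := by
    intro x y u v hx hy hu hv
    calc |x * u + y * v| ≤ |x * u| + |y * v| := abs_add_le _ _
      _ = |x| * |u| + |y| * |v| := by rw [abs_mul, abs_mul]
      _ ≤ K * 1 + K * 1 := by gcongr
      _ = 2 * K := by ring
  have hm : |deriv φ t| ≤ 2 * K := by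
    rw [hder]
    exact bound _ _ _ _ (by rwa [abs_neg]) hb (Real.abs_sin_le_one t) (Real.abs_cos_le_one t)
  refine ⟨hm, fun s => ?_⟩
  have hA := bound _ _ _ _ ha hb (Real.abs_cos_le_one t) (Real.abs_sin_le_one t)
  obtain ⟨h, rfl⟩ : ∃ h, s = t + h := ⟨s - t, by ring⟩
  have hs := hφ (t + h)
  have hexp : a * (Real.cos (t + h) - Real.cos t) + b * (Real.sin (t + h) - Real.sin t)
      = deriv φ t * h + (a * Real.cos t + b * Real.sin t) * (Real.cos h - 1)
        + deriv φ t * (Real.sin h - h) := by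
    rw [hder, Real.cos_add, Real.sin_add]; ring
  have h1 : |(a * Real.cos t + b * Real.sin t) * (Real.cos h - 1)| ≤ 2 * K * (h ^ 2 / 2) := by
    rw [abs_mul]
    gcongr
    rw [abs_sub_comm, abs_of_nonneg (by linarith [Real.cos_le_one h])]
    linarith [Real.one_sub_sq_div_two_le_cos (x := h)]
  have h2 : |deriv φ t * (Real.sin h - h)| ≤ 2 * K * (2 * h ^ 2) := by
    rw [abs_mul]
    gcongr
    exact abs_sin_sub_self_le h
  rw [add_sub_cancel_left]
  linarith [(abs_le.1 h1).1, (abs_le.1 h2).1]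

theorem sum_fin_succ_sub_castSucc (N : ℕ) (g : Fin (N + 1) → ℝ) :
    ∑ i : Fin N, (g i.succ - g i.castSucc) = g (Fin.last N) - g 0 := by
  have h1 := Fin.sum_univ_succ g
  rw [Fin.sum_univ_castSucc] at h1
  rw [Finset.sum_sub_distrib]
  linarith

/-- for a continuous convex function `f : ℝ² → ℝ`, the variation of `Φ'` on
`[0, 2π]` is bounded, where `Φ(t) = f(cos t, sin t)`. -/
theorem derivVariation_le_of_convex
    (f : EuclideanSpace ℝ (Fin 2) → ℝ)
    (hcont : Continuous f) (hconv : ConvexOn ℝ Set.univ f) :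
    ∃ c : ℝ, 0 < c ∧
      derivVariation (fun t => f (circlePt t)) 0 (2 * Real.pi) ≤ ENNReal.ofReal c := by
  obtain ⟨K, hK, hsupp⟩ := exists_circle_support hcont hconv
  have hpi := Real.pi_pos
  refine ⟨4 * K + 20 * K * (2 * Real.pi), by positivity, ?_⟩
  set φ : ℝ → ℝ := fun t => f (circlePt t) with hφ
  have hquad : ∀ t, DifferentiableAt ℝ φ t →
      |deriv φ t| ≤ 2 * K ∧ ∀ s, φ t + deriv φ t * (s - t) - 5 * K * (s - t) ^ 2 ≤ φ s := by
    intro t hd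
    obtain ⟨a, b, ha, hb, h⟩ := hsupp t
    exact quadratic_support ha hb h hd
  have hjump : ∀ t s, t < s → DifferentiableAt ℝ φ t → DifferentiableAt ℝ φ s →
      |deriv φ s - deriv φ t| ≤ (deriv φ s + 20 * K * s) - (deriv φ t + 20 * K * t) := by
    intro t s hts ht hs
    have h1 := (hquad t ht).2 s
    have h2 := (hquad s hs).2 t
    have hpos : 0 < s - t := sub_pos.2 hts
    have h3 : 0 ≤ (s - t) * (deriv φ s - deriv φ t + 10 * K * (s - t)) := by nlinarith
    have h4 := nonneg_of_mul_nonneg_right h3 hpos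
    have h5 : 0 < K * (s - t) := mul_pos hK hpos
    rw [abs_le]
    constructor <;> nlinarith
  unfold derivVariation
  refine iSup_le fun N => iSup_le fun t => iSup_le fun hmono => iSup_le fun ht => ?_
  rw [← ENNReal.ofReal_sum_of_nonneg fun i _ => norm_nonneg _]
  refine ENNReal.ofReal_le_ofReal ?_
  calc ∑ i : Fin N, ‖deriv φ (t i.succ) - deriv φ (t i.castSucc)‖
      ≤ ∑ i : Fin N, ((deriv φ (t i.succ) + 20 * K * t i.succ)
          - (deriv φ (t i.castSucc) + 20 * K * t i.castSucc)) :=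
        Finset.sum_le_sum fun i _ =>
          hjump _ _ (hmono i.castSucc_lt_succ) (ht _).2 (ht _).2
    _ = (deriv φ (t (Fin.last N)) + 20 * K * t (Fin.last N))
          - (deriv φ (t 0) + 20 * K * t 0) :=
        sum_fin_succ_sub_castSucc N fun i => deriv φ (t i) + 20 * K * t i
    _ ≤ 4 * K + 20 * K * (2 * Real.pi) := by
        have h1 := (abs_le.1 (hquad _ (ht (Fin.last N)).2).1).2
        have h2 := (abs_le.1 (hquad _ (ht 0).2).1).1
        have h3 : K * t (Fin.last N) ≤ K * (2 * Real.pi) :=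
          mul_le_mul_of_nonneg_left (ht _).1.2 hK.le
        have h4 : 0 ≤ K * t 0 := mul_nonneg hK.le (ht 0).1.1
        linarith
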